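/- Let I ⊂ S = k[x_1,...,x_n] be a monomial ideal and I^P ⊂ S^P its polarization. Then β_{i,j}(I) = β_{i,j}(I^P) for all i, j, and in particular reg(I) = reg(I^P). -/

import Mathlib

open MvPolynomial

noncomputable section

namespace PaperReg

variable (k : Type) [Field k] (σ : Type)

/-- A graded free resolution of a homogeneous ideal `I` of `MvPolynomial σ k`:
finite-rank free modules `Fin (rk i) →₀ S` with basis elements of degrees `deg i`,
degree-preserving differentials, exact, augmented onto `I`. -/
structure GradedFreeRes (I : Ideal (MvPolynomial σ k)) where
  rk : ℕ → ℕ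
  deg : (i : ℕ) → Fin (rk i) → ℕ
  aug : (Fin (rk 0) →₀ MvPolynomial σ k) →ₗ[MvPolynomial σ k] MvPolynomial σ k
  d : (i : ℕ) →
    ((Fin (rk (i + 1)) →₀ MvPolynomial σ k) →ₗ[MvPolynomial σ k] (Fin (rk i) →₀ MvPolynomial σ k))
  aug_range : LinearMap.range aug = I
  exact_zero : LinearMap.range (d 0) = LinearMap.ker aug
  exact_succ : ∀ i, LinearMap.range (d (i + 1)) = LinearMap.ker (d i)
  aug_graded : ∀ b, (aug (Finsupp.single b 1)).IsHomogeneous (deg 0 b)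
  d_graded : ∀ i b c, (d i (Finsupp.single b 1)) c = 0 ∨
    ∃ m, deg (i + 1) b = deg i c + m ∧ ((d i (Finsupp.single b 1)) c).IsHomogeneous m

/-- The `(i,j)`-th graded Betti number of `I`: the minimal number of degree-`j` basis
elements in homological position `i`, over all graded free resolutions of `I`
(achieved by the minimal graded free resolution). -/
def betti (I : Ideal (MvPolynomial σ k)) (i j : ℕ) : ℕ :=
  sInf { r | ∃ F : GradedFreeRes k σ I,
    r = (Finset.univ.filter (fun b => F.deg i b = j)).card }

/-- Castelnuovo–Mumford regularity: `reg I = max { j - i | betti I i j ≠ 0 }`. -/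
def reg (I : Ideal (MvPolynomial σ k)) : ℕ :=
  sSup { r | ∃ i j : ℕ, betti k σ I i j ≠ 0 ∧ r = j - i }

/-- The monic monomial with exponent vector `a`. -/
def mon (a : σ →₀ ℕ) : MvPolynomial σ k := monomial a 1

/-- `I` is a monomial ideal. -/
def IsMonomialIdeal (I : Ideal (MvPolynomial σ k)) : Prop :=
  ∃ A : Set (σ →₀ ℕ), I = Ideal.span (mon k σ '' A)

/-- The exponent vectors of the unique minimal set of monomial generators of a
monomial ideal: monomials of `I` minimal with respect to divisibility. -/
def minGens (I : Ideal (MvPolynomial σ k)) : Set (σ →₀ ℕ) :=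
  { a | mon k σ a ∈ I ∧ ∀ b : σ →₀ ℕ, mon k σ b ∈ I → b ≤ a → b = a }

/-- The support of a monomial ideal: variables appearing in its minimal generators. -/
def isupp (I : Ideal (MvPolynomial σ k)) : Set σ :=
  ⋃ a ∈ minGens k σ I, ↑a.support

/-- The polarization of an exponent vector: `x_1^{a_1}···x_n^{a_n}` becomes
`∏_i ∏_{j < a_i} x_{(i,j)}`. -/
def polarize (u : σ →₀ ℕ) : (σ × ℕ) →₀ ℕ :=
  u.sum fun i a => (Finset.range a).sum fun j => Finsupp.single (i, j) 1

/-- The polarization of a monomial ideal: the squarefree monomial ideal generated by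
the polarizations of its minimal monomial generators. -/
def polarIdeal (I : Ideal (MvPolynomial σ k)) : Ideal (MvPolynomial (σ × ℕ) k) :=
  Ideal.span ((fun a => monomial (polarize σ a) (1 : k)) '' minGens k σ I)

/-!
The minimal number of basis elements is the dimension of the degree `j` part of `Tor_i(I, k)`, that
is, of the homology of any graded free resolution reduced modulo the variables: reduced homology is
a homotopy invariant, and in a resolution with as few basis elements as possible the reduced
differentials vanish, since a unit entry could be removed by Gaussian elimination.

For an ideal generated by finitely many monomials, homogenizing the augmented chain complex of the
full simplex on the generators gives the Taylor resolution: its part of multidegree `u` is the chain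
complex of the simplex on the generators dividing `x ^ u`, which is a cone. Modulo the variables,
this resolution only remembers the degrees of the least common multiples of the generators.
Polarization commutes with least common multiples and preserves degrees.

An ideal that is not finitely generated has no resolution by modules of finite rank, so its Betti
numbers are `sInf ∅ = 0`; polarization preserves being finitely generated since it is an order
embedding on exponent vectors.
-/

section LinearAlgebra

variable {R : Type*} [CommRing R]

/-- The linear map `(x_c) ↦ (f_c x_c)` on finitely supported families. -/
def diagonalMap {ι M N : Type*} [AddCommGroup M] [Module R M] [AddCommGroup N] [Module R N]
    (f : ι → M →ₗ[R] N) : (ι →₀ M) →ₗ[R] (ι →₀ N) :=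
  Finsupp.lsum R fun c => Finsupp.lsingle c ∘ₗ f c

theorem diagonalMap_apply {ι M N : Type*} [AddCommGroup M] [Module R M] [AddCommGroup N]
    [Module R N] (f : ι → M →ₗ[R] N) (x : ι →₀ M) (c : ι) :
    diagonalMap f x c = f c (x c) := by
  classical
  induction x using Finsupp.induction_linear with
  | zero => simp
  | add x y hx hy => simp [hx, hy]
  | single a m =>
    rcases eq_or_ne a c with rfl | h
    · simp [diagonalMap]
    · simp [diagonalMap, Finsupp.single_eq_of_ne' h]

theorem exact_of_retract {A B C A' B' C' : Type*} [AddCommGroup A] [Module R A]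
    [AddCommGroup B] [Module R B] [AddCommGroup C] [Module R C] [AddCommGroup A'] [Module R A']
    [AddCommGroup B'] [Module R B'] [AddCommGroup C'] [Module R C']
    {f : A →ₗ[R] B} {g : B →ₗ[R] C} (hfg : Function.Exact f g)
    {pA : A →ₗ[R] A'} {qA : A' →ₗ[R] A} {pB : B →ₗ[R] B'} {qB : B' →ₗ[R] B}
    {pC : C →ₗ[R] C'} {qC : C' →ₗ[R] C} (hB : ∀ y, pB (qB y) = y)
    (hf : ∀ x, f (qA (pA x)) = qB (pB (f x))) (hg : ∀ y, g (qB (pB y)) = qC (pC (g y))) :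
    Function.Exact (pB ∘ₗ f ∘ₗ qA) (pC ∘ₗ g ∘ₗ qB) := by
  intro y
  constructor
  · intro hy
    have hgy : g (qB y) = 0 := by
      calc g (qB y) = g (qB (pB (qB y))) := by rw [hB]
        _ = qC (pC (g (qB y))) := hg _
        _ = 0 := by simpa using congrArg qC hy
    obtain ⟨x, hx⟩ := (hfg _).1 hgy
    exact ⟨pA x, by simp [hf, hx, hB]⟩
  · rintro ⟨x, rfl⟩
    simp [hg, hfg.apply_apply_eq_zero]

/-- The dimension of the homology `ker o / im i` of maps `i : W → V` and `o : V → U`. -/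
def homologyDim {U V W : Type*} [AddCommGroup U] [Module R U] [AddCommGroup V] [Module R V]
    [AddCommGroup W] [Module R W] (o : V →ₗ[R] U) (i : W →ₗ[R] V) : ℕ :=
  Module.finrank R (LinearMap.ker o ⧸ (LinearMap.range i).submoduleOf (LinearMap.ker o))

theorem finrank_eq_homologyDim {U V W V' : Type*} [AddCommGroup U] [Module R U]
    [AddCommGroup V] [Module R V] [AddCommGroup W] [Module R W] [AddCommGroup V'] [Module R V']
    {o : V →ₗ[R] U} {i : W →ₗ[R] V} (f : V' →ₗ[R] V) (g : V →ₗ[R] V')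
    (hof : ∀ y, o (f y) = 0) (hgi : ∀ w, g (i w) = 0) (hgf : ∀ y, g (f y) = y)
    (hfg : ∀ x, o x = 0 → ∃ w, i w = f (g x) - x) :
    Module.finrank R V' = homologyDim o i := by
  have hsurj : Function.Surjective (g ∘ₗ (LinearMap.ker o).subtype) :=
    fun y => ⟨⟨f y, hof y⟩, hgf y⟩
  have hker : LinearMap.ker (g ∘ₗ (LinearMap.ker o).subtype) =
      (LinearMap.range i).submoduleOf (LinearMap.ker o) := by
    ext ⟨x, hx⟩
    simp only [LinearMap.mem_ker, LinearMap.comp_apply, Submodule.subtype_apply,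
      Submodule.submoduleOf, Submodule.mem_comap, LinearMap.mem_range]
    constructor
    · intro hgx
      obtain ⟨w, hw⟩ := hfg x hx
      exact ⟨-w, by simp [hw, hgx]⟩
    · rintro ⟨w, rfl⟩
      exact hgi w
  rw [homologyDim, ← hker]
  exact ((g ∘ₗ (LinearMap.ker o).subtype).quotKerEquivOfSurjective hsurj).finrank_eq.symm

theorem exists_sequence {X : ℕ → Type*} {P : ∀ n, X n → Prop} {r : ∀ n, X n → X (n + 1) → Prop}
    (x₀ : X 0) (h₀ : P 0 x₀) (step : ∀ n x, P n x → ∃ y, P (n + 1) y ∧ r n x y) :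
    ∃ x : ∀ n, X n, x 0 = x₀ ∧ ∀ n, P n (x n) ∧ r n (x n) (x (n + 1)) := by
  choose next hnext using step
  let x : ∀ n, {x : X n // P n x} := fun n =>
    Nat.rec ⟨x₀, h₀⟩ (fun n x => ⟨next n x.1 x.2, (hnext n x.1 x.2).1⟩) n
  exact ⟨fun n => (x n).1, rfl, fun n => ⟨(x n).2, (hnext n _ (x n).2).2⟩⟩

end LinearAlgebra

section GradedMaps

variable {R : Type*} [CommRing R] {ν : Type*} {α β γ : Type*} {dα : α → ℕ} {dβ : β → ℕ}
  {dγ : γ → ℕ}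

/-- Linear maps between the free `MvPolynomial ν R`-modules with bases `α` and `β`. -/
abbrev FreeHom (R ν α β : Type*) [CommRing R] : Type _ :=
  (α →₀ MvPolynomial ν R) →ₗ[MvPolynomial ν R] (β →₀ MvPolynomial ν R)

/-- The projection of the free module with basis degrees `deg` onto its part of degree `p`. -/
def degComponent (deg : α → ℕ) (p : ℕ) :
    (α →₀ MvPolynomial ν R) →ₗ[R] (α →₀ MvPolynomial ν R) :=
  diagonalMap fun c => if deg c ≤ p then homogeneousComponent (p - deg c) else 0

theorem coeff_degComponent (deg : α → ℕ) (p : ℕ) (x : α →₀ MvPolynomial ν R) (c : α)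
    (u : ν →₀ ℕ) :
    coeff u (degComponent deg p x c) = if deg c + u.degree = p then coeff u (x c) else 0 := by
  rw [degComponent, diagonalMap_apply]
  by_cases h : deg c ≤ p
  · simp only [if_pos h, coeff_homogeneousComponent]
    congr 1
    exact propext (by omega)
  · rw [if_neg h, if_neg (by omega)]
    simp

theorem degComponent_degComponent (deg : α → ℕ) (p q : ℕ) (x : α →₀ MvPolynomial ν R) :
    degComponent deg p (degComponent deg q x) = if p = q then degComponent deg q x else 0 := by
  ext c u
  rw [coeff_degComponent]
  split_ifs with hp hpq hpq
  · rfl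
  · simp [coeff_degComponent, hp, hpq]
  · simp [coeff_degComponent, ← hpq, hp]
  · simp

theorem degComponent_single_one (deg : α → ℕ) (a : α) :
    degComponent deg (deg a) (Finsupp.single a (1 : MvPolynomial ν R)) = Finsupp.single a 1 := by
  classical
  ext c u
  rw [coeff_degComponent]
  rcases eq_or_ne a c with rfl | hac
  · rcases eq_or_ne 0 u with rfl | hu
    · simp
    · simp [coeff_one, hu]
  · simp [Finsupp.single_eq_of_ne' hac]

theorem degComponent_monomial_smul (deg : α → ℕ) (p : ℕ) (u : ν →₀ ℕ) (r : R)
    (x : α →₀ MvPolynomial ν R) :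
    degComponent deg (p + u.degree) (monomial u r • x) = monomial u r • degComponent deg p x := by
  ext c v
  simp only [coeff_degComponent, Finsupp.smul_apply, smul_eq_mul, coeff_monomial_mul']
  by_cases huv : u ≤ v
  · obtain ⟨w, rfl⟩ := le_iff_exists_add.1 huv
    simp only [le_self_add, if_true, add_tsub_cancel_left, map_add, ← add_assoc,
      add_right_comm _ u.degree, Nat.add_right_cancel_iff, mul_ite, mul_zero]
  · simp [huv]

/-- A linear map of graded free modules is graded if it preserves degrees. -/
def IsGraded (dα : α → ℕ) (dβ : β → ℕ) (f : FreeHom R ν α β) : Prop :=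
  ∀ p x, f (degComponent dα p x) = degComponent dβ p (f x)

namespace IsGraded

variable {f f' : FreeHom R ν α β} {g : FreeHom R ν β γ}

theorem zero : IsGraded dα dβ (0 : FreeHom R ν α β) :=
  fun _ _ => by simp

theorem id : IsGraded dα dα (LinearMap.id : FreeHom R ν α α) :=
  fun _ _ => rfl

theorem sub (hf : IsGraded dα dβ f) (hf' : IsGraded dα dβ f') : IsGraded dα dβ (f - f') :=
  fun p x => by simp [hf p x, hf' p x]

theorem comp (hg : IsGraded dβ dγ g) (hf : IsGraded dα dβ f) : IsGraded dα dγ (g ∘ₗ f) :=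
  fun p x => by simp [hf p x, hg p (f x)]

end IsGraded

theorem isGraded_iff {f : FreeHom R ν α β} : IsGraded dα dβ f ↔
    ∀ a, degComponent dβ (dα a) (f (Finsupp.single a 1)) = f (Finsupp.single a 1) := by
  refine ⟨fun hf a => by rw [← hf, degComponent_single_one], fun h p x => ?_⟩
  induction x using Finsupp.induction_linear with
  | zero => simp
  | add x y hx hy => simp only [map_add, hx, hy]
  | single a s =>
    induction s using MvPolynomial.induction_on' with
    | add s t hs ht => simp only [Finsupp.single_add, map_add, hs, ht]
    | monomial u r =>
      have hsingle : Finsupp.single a (monomial u r) =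
          degComponent dα (dα a + u.degree) (monomial u r • Finsupp.single a 1) := by
        rw [degComponent_monomial_smul, degComponent_single_one]
        simp
      have himage : f (Finsupp.single a (monomial u r)) =
          degComponent dβ (dα a + u.degree) (monomial u r • f (Finsupp.single a 1)) := by
        rw [degComponent_monomial_smul, h, ← map_smul]
        simp
      rw [himage, degComponent_degComponent, hsingle, degComponent_degComponent, ← hsingle,
        apply_ite f, himage, map_zero]

theorem isGraded_iff_coeff {f : FreeHom R ν α β} : IsGraded dα dβ f ↔
    ∀ a b u, coeff u (f (Finsupp.single a 1) b) ≠ 0 → dβ b + u.degree = dα a := by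
  simp only [isGraded_iff, Finsupp.ext_iff, MvPolynomial.ext_iff, coeff_degComponent,
    ite_eq_left_iff, ne_eq, not_imp_comm (a := _ = (0 : R)), eq_comm (a := (0 : R))]

theorem IsGraded.exists_lift {f : FreeHom R ν α β} {u : FreeHom R ν γ β}
    (hf : IsGraded dα dβ f) (hu : IsGraded dγ dβ u)
    (hle : LinearMap.range u ≤ LinearMap.range f) :
    ∃ v : FreeHom R ν γ α,
      IsGraded dγ dα v ∧ ∀ x, f (v x) = u x := by
  choose x hx using fun c => hle (LinearMap.mem_range_self u (Finsupp.single c 1))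
  refine ⟨Finsupp.linearCombination _ fun c => degComponent dα (dγ c) (x c), ?_, ?_⟩
  · simp [isGraded_iff, degComponent_degComponent]
  · refine LinearMap.congr_fun (f := f ∘ₗ _) (Finsupp.lhom_ext' fun c => LinearMap.ext_ring ?_)
    simp [hf _ _, hx, isGraded_iff.1 hu c]

end GradedMaps

section Reduction

variable {R : Type*} [CommRing R] {ν : Type*} {α β γ : Type*} {dα : α → ℕ} {dβ : β → ℕ}
  {dγ : γ → ℕ}

/-- The part of an `R`-linear map between free modules with basis degrees `dα` and `dβ` that maps
basis elements of degree `j` to basis elements of degree `j`. -/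
def strand (dα : α → ℕ) (dβ : β → ℕ) (j : ℕ) (D : (α →₀ R) →ₗ[R] (β →₀ R)) :
    ({a // dα a = j} →₀ R) →ₗ[R] ({b // dβ b = j} →₀ R) :=
  Finsupp.lsubtypeDomain {b | dβ b = j} ∘ₗ D ∘ₗ Finsupp.lmapDomain R R Subtype.val

theorem strand_single (D : (α →₀ R) →ₗ[R] (β →₀ R)) {j : ℕ} (a : {a // dα a = j})
    (b : {b // dβ b = j}) :
    strand dα dβ j D (Finsupp.single a 1) b = D (Finsupp.single a.1 1) b.1 := by
  rw [strand, LinearMap.comp_apply, LinearMap.comp_apply, Finsupp.lmapDomain_apply,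
    Finsupp.mapDomain_single]
  rfl

/-- The class of an element of a graded free module modulo the variables, in degree `j`. -/
def residue (deg : α → ℕ) (j : ℕ) : (α →₀ MvPolynomial ν R) →ₗ[R] ({a // deg a = j} →₀ R) :=
  Finsupp.mapRange.linearMap (lcoeff R 0) ∘ₗ Finsupp.lsubtypeDomain {a | deg a = j}

theorem residue_apply {j : ℕ} (x : α →₀ MvPolynomial ν R) (a : {a // dα a = j}) :
    residue dα j x a = coeff 0 (x a.1) :=
  rfl

/-- The map induced modulo the variables, in degree `j`, by a graded linear map. -/
def reduction (dα : α → ℕ) (dβ : β → ℕ) (j : ℕ) (f : FreeHom R ν α β) :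
    ({a // dα a = j} →₀ R) →ₗ[R] ({b // dβ b = j} →₀ R) :=
  residue dβ j ∘ₗ f.restrictScalars R ∘ₗ
    Finsupp.lsum R fun a => Finsupp.lsingle a.1 ∘ₗ Algebra.linearMap R (MvPolynomial ν R)

theorem reduction_single (f : FreeHom R ν α β) {j : ℕ}
    (a : {a // dα a = j}) (b : {b // dβ b = j}) :
    reduction dα dβ j f (Finsupp.single a 1) b = coeff 0 (f (Finsupp.single a.1 1) b.1) := by
  simp [reduction, residue_apply]

theorem residue_smul (j : ℕ) (s : MvPolynomial ν R) (x : α →₀ MvPolynomial ν R) :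
    residue dα j (s • x) = coeff 0 s • residue dα j x := by
  ext a
  simp [residue_apply, ← constantCoeff_eq]

theorem reduction_residue {f : FreeHom R ν α β}
    (hf : IsGraded dα dβ f) (j : ℕ) (x : α →₀ MvPolynomial ν R) :
    reduction dα dβ j f (residue dα j x) = residue dβ j (f x) := by
  classical
  induction x using Finsupp.induction_linear with
  | zero => simp
  | add x y hx hy => simp only [map_add, hx, hy]
  | single a s =>
    rw [← mul_one s, ← smul_eq_mul, ← Finsupp.smul_single, residue_smul, map_smul, map_smul,
      residue_smul]
    congr 1
    ext b
    rw [residue_apply]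
    by_cases ha : dα a = j
    · have hres : residue dα j (Finsupp.single a 1 : α →₀ MvPolynomial ν R) =
          Finsupp.single ⟨a, ha⟩ 1 := by
        ext c
        simp only [residue_apply, Finsupp.single_apply, Subtype.ext_iff, apply_ite (coeff 0),
          coeff_zero_one, coeff_zero]
      rw [hres, reduction_single]
    · have hres : residue dα j (Finsupp.single a 1 : α →₀ MvPolynomial ν R) = 0 := by
        ext c
        rw [residue_apply, Finsupp.single_eq_of_ne (by rintro rfl; exact ha c.2)]
        simp
      rw [hres, map_zero]
      by_contra hne
      exact ha ((isGraded_iff_coeff.1 hf a b.1 0 (Ne.symm hne)).symm.trans (by simp [b.2]))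

theorem residue_surjective (deg : α → ℕ) (j : ℕ) :
    Function.Surjective
      (residue deg j : (α →₀ MvPolynomial ν R) →ₗ[R] ({a // deg a = j} →₀ R)) := fun y =>
  ⟨(y.mapDomain Subtype.val).mapRange C C_0, by
    ext a
    simp [residue_apply, Finsupp.mapDomain_apply Subtype.val_injective]⟩

theorem reduction_eq_of_residue {f : FreeHom R ν α β}
    (hf : IsGraded dα dβ f) (j : ℕ) {D : ({a // dα a = j} →₀ R) →ₗ[R] ({b // dβ b = j} →₀ R)}
    (hD : ∀ x, D (residue dα j x) = residue dβ j (f x)) : reduction dα dβ j f = D := by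
  refine LinearMap.ext fun y => ?_
  obtain ⟨x, rfl⟩ := residue_surjective (ν := ν) dα j y
  rw [reduction_residue hf, hD]

theorem reduction_comp {f : FreeHom R ν α β} {g : FreeHom R ν β γ}
    (hf : IsGraded dα dβ f) (hg : IsGraded dβ dγ g) (j : ℕ) :
    reduction dα dγ j (g ∘ₗ f) = reduction dβ dγ j g ∘ₗ reduction dα dβ j f :=
  reduction_eq_of_residue (hg.comp hf) j fun x => by
    simp [reduction_residue hf, reduction_residue hg]

theorem IsGraded.exists_entry_eq_C {f : FreeHom R ν α β}
    (hf : IsGraded dα dβ f) {j : ℕ} (h : reduction dα dβ j f ≠ 0) :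
    ∃ a b r, dα a = j ∧ dβ b = j ∧ r ≠ 0 ∧ f (Finsupp.single a 1) b = C r := by
  classical
  contrapose! h
  refine Finsupp.lhom_ext' fun a => LinearMap.ext_ring (Finsupp.ext fun b => ?_)
  by_contra hne
  rw [LinearMap.comp_apply, Finsupp.lsingle_apply, reduction_single] at hne
  refine h a.1 b.1 _ a.2 b.2 hne (MvPolynomial.ext _ _ fun u => ?_)
  rw [coeff_C]
  split_ifs with hu
  · rw [← hu]
  · by_contra hu'
    have hdeg := isGraded_iff_coeff.1 hf a.1 b.1 u hu'
    exact hu ((Finsupp.degree_eq_zero_iff u).1 (by have := a.2; have := b.2; omega)).symm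

end Reduction

universe u v w

/-- A graded free resolution `⋯ → M₂ → M₁ → M₀ ≅ S` of `S ⧸ I` with finite bases, where
`S = MvPolynomial ν R`; dropping `M₀` leaves a resolution of `I` shifted by one. -/
structure QuotientResolution {R : Type u} [CommRing R] {ν : Type v}
    (I : Ideal (MvPolynomial ν R)) where
  ι : ℕ → Type w
  finite : ∀ i, Finite (ι i)
  deg : ∀ i, ι i → ℕ
  d : ∀ i, FreeHom R ν (ι (i + 1)) (ι i)
  isGraded : ∀ i, IsGraded (deg (i + 1)) (deg i) (d i)
  exact : ∀ i, Function.Exact (d (i + 1)) (d i)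
  aug : (ι 0 →₀ MvPolynomial ν R) ≃ₗ[MvPolynomial ν R] MvPolynomial ν R
  aug_degComponent : ∀ p x, aug (degComponent (deg 0) p x) = homogeneousComponent p (aug x)
  map_range : (LinearMap.range (d 0)).map aug.toLinearMap = I

namespace QuotientResolution

section HomotopyInvariance

variable {R : Type*} [CommRing R] {ν : Type*} {I : Ideal (MvPolynomial ν R)}

theorem d_d (F : QuotientResolution I) (i : ℕ) (x) : F.d i (F.d (i + 1) x) = 0 :=
  (F.exact i).apply_apply_eq_zero x

theorem range_le_range_d_succ (F : QuotientResolution I) {α : Type*} (i : ℕ)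
    {f : FreeHom R ν α (F.ι (i + 1))} (hf : ∀ x, F.d i (f x) = 0) :
    LinearMap.range f ≤ LinearMap.range (F.d (i + 1)) := by
  rintro _ ⟨x, rfl⟩
  exact (F.exact i _).1 (hf x)

theorem range_augSymm_comp_aug_comp_d_le (F G : QuotientResolution I) :
    LinearMap.range ((G.aug.symm.toLinearMap ∘ₗ F.aug.toLinearMap) ∘ₗ F.d 0) ≤
      LinearMap.range (G.d 0) := by
  rintro _ ⟨x, rfl⟩
  have hmem : F.aug (F.d 0 x) ∈ (LinearMap.range (G.d 0)).map G.aug.toLinearMap := by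
    rw [G.map_range]
    exact F.map_range.le (Submodule.mem_map_of_mem (LinearMap.mem_range_self _ x))
  obtain ⟨_, ⟨y, rfl⟩, hy⟩ := hmem
  exact ⟨y, G.aug.injective (by simpa using hy)⟩

theorem isGraded_augSymm_comp_aug (F G : QuotientResolution I) :
    IsGraded (F.deg 0) (G.deg 0) (G.aug.symm.toLinearMap ∘ₗ F.aug.toLinearMap) := fun p x =>
  G.aug.injective (by simp [F.aug_degComponent, G.aug_degComponent])

theorem exists_comparison (F G : QuotientResolution I) :
    ∃ φ : ∀ i, FreeHom R ν (F.ι i) (G.ι i), φ 0 = G.aug.symm.toLinearMap ∘ₗ F.aug.toLinearMap ∧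
      (∀ i, IsGraded (F.deg i) (G.deg i) (φ i)) ∧
      ∀ i x, G.d i (φ (i + 1) x) = φ i (F.d i x) := by
  obtain ⟨φ, hφ₀, hφ⟩ := exists_sequence (X := fun i => FreeHom R ν (F.ι i) (G.ι i))
    (P := fun i φ => IsGraded (F.deg i) (G.deg i) φ ∧
      LinearMap.range (φ ∘ₗ F.d i) ≤ LinearMap.range (G.d i))
    (r := fun i φ φ' => ∀ x, G.d i (φ' x) = φ (F.d i x))
    _ ⟨isGraded_augSymm_comp_aug F G, range_augSymm_comp_aug_comp_d_le F G⟩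
    fun i φ ⟨hφ, hle⟩ => by
      obtain ⟨φ', hφ', hcomm⟩ := (G.isGraded i).exists_lift (hφ.comp (F.isGraded i)) hle
      exact ⟨φ', ⟨hφ', G.range_le_range_d_succ i fun x => by simp [hcomm, d_d]⟩, hcomm⟩
  exact ⟨φ, hφ₀, fun i => (hφ i).1.1, fun i => (hφ i).2⟩

theorem exists_homotopy (F : QuotientResolution I) {χ : ∀ i, FreeHom R ν (F.ι i) (F.ι i)}
    (hχ : ∀ i, IsGraded (F.deg i) (F.deg i) (χ i))
    (hd : ∀ i x, F.d i (χ (i + 1) x) = χ i (F.d i x)) (hχ₀ : χ 0 = 0) :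
    ∃ h : ∀ i, FreeHom R ν (F.ι i) (F.ι (i + 1)), h 0 = 0 ∧
      (∀ i, IsGraded (F.deg i) (F.deg (i + 1)) (h i)) ∧
      ∀ i x, F.d (i + 1) (h (i + 1) x) = χ (i + 1) x - h i (F.d i x) := by
  obtain ⟨h, h₀, hh⟩ := exists_sequence (X := fun i => FreeHom R ν (F.ι i) (F.ι (i + 1)))
    (P := fun i h => IsGraded (F.deg i) (F.deg (i + 1)) h ∧
      LinearMap.range (χ (i + 1) - h ∘ₗ F.d i) ≤ LinearMap.range (F.d (i + 1)))
    (r := fun i h h' => ∀ x, F.d (i + 1) (h' x) = χ (i + 1) x - h (F.d i x))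
    0 ⟨IsGraded.zero, F.range_le_range_d_succ 0 fun x => by simp [hd, hχ₀]⟩
    fun i h ⟨hh, hle⟩ => by
      obtain ⟨h', hh', hcomm⟩ := (F.isGraded (i + 1)).exists_lift
        ((hχ (i + 1)).sub (hh.comp (F.isGraded i))) hle
      exact ⟨h', ⟨hh', F.range_le_range_d_succ (i + 1) fun x => by simp [hcomm, hd, d_d]⟩, hcomm⟩
  exact ⟨h, h₀, fun i => (hh i).1.1, fun i => (hh i).2⟩

/-- The differential `M_{i+1} → M_i` modulo the variables, in degree `j`. The differential onto
`M₀` is replaced by zero, so that the homology at `M_{i+1}` is the degree `j` part of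
`Tor_i(I, R)`. -/
def reducedD (F : QuotientResolution I) (i j : ℕ) :
    ({b // F.deg (i + 1) b = j} →₀ R) →ₗ[R] ({b // F.deg i b = j} →₀ R) :=
  if i = 0 then 0 else reduction (F.deg (i + 1)) (F.deg i) j (F.d i)

theorem reducedD_zero (F : QuotientResolution I) (j : ℕ) : F.reducedD 0 j = 0 :=
  rfl

theorem reducedD_succ (F : QuotientResolution I) (i j : ℕ) :
    F.reducedD (i + 1) j = reduction (F.deg (i + 2)) (F.deg (i + 1)) j (F.d (i + 1)) :=
  rfl

theorem reducedD_reduction {F G : QuotientResolution I}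
    {φ : ∀ i, FreeHom R ν (F.ι i) (G.ι i)} (hφ : ∀ i, IsGraded (F.deg i) (G.deg i) (φ i))
    (hd : ∀ i x, G.d i (φ (i + 1) x) = φ i (F.d i x)) (i j : ℕ) (y) :
    G.reducedD i j (reduction (F.deg (i + 1)) (G.deg (i + 1)) j (φ (i + 1)) y) =
      reduction (F.deg i) (G.deg i) j (φ i) (F.reducedD i j y) := by
  rcases i with _ | i
  · simp [reducedD_zero]
  · obtain ⟨x, rfl⟩ := residue_surjective (ν := ν) _ _ y
    simp only [reducedD_succ, reduction_residue (hφ _), reduction_residue (G.isGraded _),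
      reduction_residue (F.isGraded _), hd]

theorem exists_reduced_homotopy {F : QuotientResolution I} {χ : ∀ i, FreeHom R ν (F.ι i) (F.ι i)}
    (hχ : ∀ i, IsGraded (F.deg i) (F.deg i) (χ i))
    (hd : ∀ i x, F.d i (χ (i + 1) x) = χ i (F.d i x)) (hχ₀ : χ 0 = LinearMap.id) (i j : ℕ) :
    ∃ (s : ({b // F.deg (i + 1) b = j} →₀ R) →ₗ[R] _) (s' : _ →ₗ[R] _), ∀ y,
      reduction (F.deg (i + 1)) (F.deg (i + 1)) j (χ (i + 1)) y - y =
        F.reducedD (i + 1) j (s y) + s' (F.reducedD i j y) := by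
  obtain ⟨h, h₀, hh, hdh⟩ := F.exists_homotopy (χ := fun i => χ i - LinearMap.id)
    (fun i => (hχ i).sub IsGraded.id) (fun i x => by simp [hd]) (by ext; simp [hχ₀])
  refine ⟨reduction _ _ j (h (i + 1)), reduction _ _ j (h i), fun y => ?_⟩
  obtain ⟨x, rfl⟩ := residue_surjective (ν := ν) _ _ y
  have hout : reduction _ _ j (h i) (F.reducedD i j (residue (F.deg (i + 1)) j x)) =
      residue (F.deg (i + 1)) j (h i (F.d i x)) := by
    rcases i with _ | i
    · simp [h₀, reducedD_zero]
    · rw [reducedD_succ, reduction_residue (F.isGraded _), reduction_residue (hh _)]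
  rw [hout, reducedD_succ, reduction_residue (hh _), reduction_residue (F.isGraded _), hdh,
    reduction_residue (hχ _)]
  simp

theorem card_eq_homologyDim [Nontrivial R] (F G : QuotientResolution I) {i j : ℕ}
    (hin : F.reducedD (i + 1) j = 0) (hout : F.reducedD i j = 0) :
    Nat.card {b // F.deg (i + 1) b = j} = homologyDim (G.reducedD i j) (G.reducedD (i + 1) j) := by
  have := F.finite (i + 1)
  have := Fintype.ofFinite {b // F.deg (i + 1) b = j}
  obtain ⟨φ, hφ₀, hφ, hdφ⟩ := F.exists_comparison G
  obtain ⟨ψ, hψ₀, hψ, hdψ⟩ := G.exists_comparison F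
  obtain ⟨s, s', hs⟩ := exists_reduced_homotopy (fun i => (hψ i).comp (hφ i))
    (fun i x => by simp [hdψ, hdφ]) (by ext; simp [hφ₀, hψ₀]) i j
  obtain ⟨t, t', ht⟩ := exists_reduced_homotopy (fun i => (hφ i).comp (hψ i))
    (fun i x => by simp [hdψ, hdφ]) (by ext; simp [hφ₀, hψ₀]) i j
  simp only [reduction_comp (hφ _) (hψ _), hin, hout, LinearMap.zero_apply, map_zero, add_zero,
    sub_eq_zero, LinearMap.comp_apply] at hs
  simp only [reduction_comp (hψ _) (hφ _), LinearMap.comp_apply] at ht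
  rw [Nat.card_eq_fintype_card, ← Module.finrank_finsupp_self R]
  refine finrank_eq_homologyDim (reduction _ _ j (φ (i + 1))) (reduction _ _ j (ψ (i + 1)))
    (fun y => ?_) (fun y => ?_) hs fun x hx => ⟨t x, ?_⟩
  · rw [reducedD_reduction hφ hdφ, hout, LinearMap.zero_apply, map_zero]
  · rw [← reducedD_reduction hψ hdψ, hin, LinearMap.zero_apply]
  · rw [ht, hx, map_zero, add_zero]

end HomotopyInvariance

end QuotientResolution

section Elimination

variable {R : Type*} [CommRing R] {ν α β : Type*} {dα : α → ℕ} {dβ : β → ℕ}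

/-- The projection of a free module onto the free module on a subset of its basis. -/
def coordProj (s : Set α) : FreeHom R ν α s :=
  Finsupp.lsubtypeDomain s

/-- The inclusion of the free module on a subset of the basis. -/
def coordIncl (s : Set α) : FreeHom R ν s α :=
  Finsupp.lmapDomain _ _ Subtype.val

theorem coordProj_apply (s : Set α) (x : α →₀ MvPolynomial ν R) (a : s) :
    coordProj s x a = x a :=
  rfl

theorem coordIncl_apply (s : Set α) (x : s →₀ MvPolynomial ν R) (a : s) :
    coordIncl s x a = x a :=
  Finsupp.mapDomain_apply Subtype.val_injective x a

theorem coordIncl_apply_of_notMem {s : Set α} (x : s →₀ MvPolynomial ν R) {a : α} (ha : a ∉ s) :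
    coordIncl s x a = 0 :=
  Finsupp.mapDomain_of_notMem_range _ _ (by simpa using ha)

theorem isGraded_coordProj (deg : α → ℕ) (s : Set α) :
    IsGraded deg (fun a : s => deg a) (coordProj s : FreeHom R ν α s) := fun p x => by
  ext a u
  simp [coeff_degComponent, coordProj_apply]

theorem isGraded_coordIncl (deg : α → ℕ) (s : Set α) :
    IsGraded (fun a : s => deg a) deg (coordIncl s : FreeHom R ν s α) := by
  simp [isGraded_iff, coordIncl, Finsupp.mapDomain_single, degComponent_single_one]

/-- A splitting of the graded endomorphism `π` as `q ∘ p`, with `p ∘ q = id`, through the free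
module on a subset `s` of the basis. -/
structure GradedRetract (deg : α → ℕ) (π : FreeHom R ν α α) (s : Set α) where
  p : FreeHom R ν α s
  q : FreeHom R ν s α
  isGraded_p : IsGraded deg (fun a : s => deg a) p
  isGraded_q : IsGraded (fun a : s => deg a) deg q
  p_q : ∀ x, p (q x) = x
  q_p : ∀ x, q (p x) = π x

theorem GradedRetract.nonempty_of_range {deg : α → ℕ} {π : FreeHom R ν α α} {s : Set α}
    (hπ : IsGraded deg deg π) (hrange : ∀ x, ∀ a ∉ s, π x a = 0)
    (hfix : ∀ x, (∀ a ∉ s, x a = 0) → π x = x) : Nonempty (GradedRetract deg π s) := by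
  refine ⟨⟨coordProj s ∘ₗ π, coordIncl s, (isGraded_coordProj deg s).comp hπ,
    isGraded_coordIncl deg s, fun x => ?_, fun x => ?_⟩⟩
  · ext a : 1
    rw [LinearMap.comp_apply, hfix _ fun _ => coordIncl_apply_of_notMem x, coordProj_apply,
      coordIncl_apply]
  · ext a : 1
    by_cases ha : a ∈ s
    · exact coordIncl_apply s _ ⟨a, ha⟩
    · rw [coordIncl_apply_of_notMem _ ha, hrange x a ha]

theorem GradedRetract.nonempty_of_ker {deg : α → ℕ} {π : FreeHom R ν α α} {s : Set α}
    (hπ : IsGraded deg deg π) (hcoord : ∀ x, ∀ a ∈ s, π x a = x a)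
    (hker : ∀ x, (∀ a ∈ s, x a = 0) → π x = 0) : Nonempty (GradedRetract deg π s) := by
  refine ⟨⟨coordProj s, π ∘ₗ coordIncl s, isGraded_coordProj deg s,
    hπ.comp (isGraded_coordIncl deg s), fun x => ?_, fun x => ?_⟩⟩
  · ext a : 1
    rw [coordProj_apply, LinearMap.comp_apply, hcoord _ a a.2, coordIncl_apply]
  · rw [LinearMap.comp_apply, ← sub_eq_zero, ← map_sub, hker]
    intro a ha
    rw [Finsupp.sub_apply, coordIncl_apply s _ ⟨a, ha⟩, coordProj_apply, sub_self]

/-- The elementary map sending `e_b` to `r e_a` and killing all other basis elements. -/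
def elementary (a : α) (b : β) (r : R) : FreeHom R ν β α :=
  LinearMap.toSpanSingleton _ _ (Finsupp.single a (C r)) ∘ₗ Finsupp.lapply b

theorem elementary_apply (a : α) (b : β) (r : R) (x : β →₀ MvPolynomial ν R) :
    elementary a b r x = (x b * C r) • Finsupp.single a 1 := by
  simp [elementary]

theorem isGraded_elementary {a : α} {b : β} (hab : dα a = dβ b) (r : R) :
    IsGraded dβ dα (elementary a b r : FreeHom R ν β α) := by
  classical
  refine isGraded_iff_coeff.2 fun b' a' u h => ?_
  rw [elementary_apply, Finsupp.smul_single_one, Finsupp.single_apply, Finsupp.single_apply] at h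
  split_ifs at h with ha hb
  · subst ha hb
    rw [one_mul, coeff_C] at h
    rw [← (ite_ne_right_iff.1 h).1, map_zero, add_zero, hab]
  · simp at h
  · simp at h

section UnitEntry

variable {f : FreeHom R ν α β} {a : α} {b : β} {r : Rˣ}

theorem nonempty_gradedRetract_of_target (hf : IsGraded dα dβ f) (hab : dα a = dβ b)
    (hr : f (Finsupp.single a 1) b = C (r : R)) :
    Nonempty (GradedRetract dβ (LinearMap.id - f ∘ₗ elementary a b ↑r⁻¹) {b}ᶜ) := by
  have happly : ∀ x, (LinearMap.id - f ∘ₗ elementary a b ↑r⁻¹ : FreeHom R ν β β) x =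
      x - (x b * C (↑r⁻¹ : R)) • f (Finsupp.single a 1) := fun x => by
    rw [← map_smul, ← elementary_apply]
    rfl
  refine GradedRetract.nonempty_of_range
    (IsGraded.id.sub (hf.comp (isGraded_elementary hab _))) (fun x b' hb' => ?_) fun x hx => ?_
  · obtain rfl : b' = b := by simpa using hb'
    simp [happly, hr, mul_assoc, ← C_mul]
  · rw [happly, hx b (by simp), zero_mul, zero_smul, sub_zero]

theorem nonempty_gradedRetract_of_source (hf : IsGraded dα dβ f) (hab : dα a = dβ b)
    (hr : f (Finsupp.single a 1) b = C (r : R)) :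
    Nonempty (GradedRetract dα (LinearMap.id - elementary a b ↑r⁻¹ ∘ₗ f) {a}ᶜ) := by
  refine GradedRetract.nonempty_of_ker
    (IsGraded.id.sub ((isGraded_elementary hab _).comp hf)) (fun x a' ha' => ?_) fun x hx => ?_
  · simp [elementary_apply, Finsupp.single_eq_of_ne (show a' ≠ a from ha')]
  · obtain ⟨s, rfl⟩ : ∃ s, x = s • Finsupp.single a (1 : MvPolynomial ν R) := by
      refine ⟨x a, Finsupp.ext fun a' => ?_⟩
      by_cases ha' : a' = a
      · simp [ha']
      · simp [hx a' ha', Finsupp.single_eq_of_ne ha']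
    rw [map_smul, LinearMap.sub_apply, LinearMap.comp_apply, elementary_apply, hr, ← C_mul,
      r.mul_inv]
    simp

end UnitEntry

theorem nonempty_gradedRetract_id (deg : α → ℕ) :
    Nonempty (GradedRetract deg (LinearMap.id : FreeHom R ν α α) Set.univ) :=
  GradedRetract.nonempty_of_range IsGraded.id (by simp) (by simp)

theorem card_subtype_lt_of_notMem [Finite α] {s : Set α} {P : α → Prop} {a : α} (ha : a ∉ s)
    (hP : P a) : Nat.card {x : s // P x} < Nat.card {x // P x} := by
  have := Fintype.ofFinite {x : s // P x}
  have := Fintype.ofFinite {x // P x}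
  rw [Nat.card_eq_fintype_card, Nat.card_eq_fintype_card]
  refine Fintype.card_lt_of_injective_of_notMem (b := ⟨a, hP⟩)
    (Subtype.map Subtype.val fun _ hx => hx) (Subtype.map_injective _ Subtype.val_injective) ?_
  rintro ⟨x, hx⟩
  have hxa : x.1 = a := congrArg Subtype.val hx
  exact ha (hxa ▸ x.1.2)

namespace QuotientResolution

variable {I : Ideal (MvPolynomial ν R)}

/-- The resolution cut out by a graded chain retract of `F` that is the identity on `M₀`. -/
def retract (F : QuotientResolution I) {π : ∀ i, FreeHom R ν (F.ι i) (F.ι i)}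
    {s : ∀ i, Set (F.ι i)} (ρ : ∀ i, GradedRetract (F.deg i) (π i) (s i))
    (hd : ∀ i x, F.d i (π (i + 1) x) = π i (F.d i x)) (hπ₀ : ∀ x, π 0 x = x) :
    QuotientResolution I where
  ι i := s i
  finite i := have := F.finite i; inferInstance
  deg i a := F.deg i a
  d i := (ρ i).p ∘ₗ F.d i ∘ₗ (ρ (i + 1)).q
  isGraded i := (ρ i).isGraded_p.comp ((F.isGraded i).comp (ρ (i + 1)).isGraded_q)
  exact i := exact_of_retract (pA := (ρ (i + 2)).p) (qC := (ρ i).q) (F.exact i) (ρ (i + 1)).p_q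
    (fun x => by simp [(ρ _).q_p, hd]) (fun x => by simp [(ρ _).q_p, hd])
  aug := LinearEquiv.ofLinearMap (ρ 0).q (ρ 0).p
    (LinearMap.ext fun x => by simp [(ρ 0).q_p, hπ₀]) (LinearMap.ext (ρ 0).p_q) ≪≫ₗ F.aug
  aug_degComponent p x := by simp [(ρ 0).isGraded_q p x, F.aug_degComponent]
  map_range := by
    refine Eq.trans (Submodule.ext fun y => ?_) F.map_range
    constructor
    · rintro ⟨_, ⟨x, rfl⟩, rfl⟩
      exact ⟨F.d 0 ((ρ 1).q x), ⟨_, rfl⟩, by simp [(ρ 0).q_p, hπ₀]⟩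
    · rintro ⟨_, ⟨x, rfl⟩, rfl⟩
      exact ⟨_, ⟨(ρ 1).p x, rfl⟩, by simp [(ρ _).q_p, hπ₀, hd]⟩

/-- The chain map `1 - (d s + s d)`. -/
def homotopyProj (F : QuotientResolution I) (s : ∀ i, FreeHom R ν (F.ι i) (F.ι (i + 1))) :
    ∀ i, FreeHom R ν (F.ι i) (F.ι i)
  | 0 => LinearMap.id - F.d 0 ∘ₗ s 0
  | i + 1 => LinearMap.id - F.d (i + 1) ∘ₗ s (i + 1) - s i ∘ₗ F.d i

theorem d_homotopyProj (F : QuotientResolution I) (s : ∀ i, FreeHom R ν (F.ι i) (F.ι (i + 1)))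
    (i : ℕ) (x) : F.d i (F.homotopyProj s (i + 1) x) = F.homotopyProj s i (F.d i x) := by
  rcases i with _ | i <;> simp [homotopyProj, d_d]

theorem exists_retract_of_unit_entry (F : QuotientResolution I) {n : ℕ} {a : F.ι (n + 2)}
    {b : F.ι (n + 1)} {r : Rˣ} (hr : F.d (n + 1) (Finsupp.single a 1) b = C (r : R))
    (hab : F.deg (n + 2) a = F.deg (n + 1) b) :
    ∃ (s : ∀ i, Set (F.ι i)) (π : ∀ i, FreeHom R ν (F.ι i) (F.ι i)),
      (∀ i, Nonempty (GradedRetract (F.deg i) (π i) (s i))) ∧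
      (∀ i x, F.d i (π (i + 1) x) = π i (F.d i x)) ∧ (∀ x, π 0 x = x) ∧
      a ∉ s (n + 2) ∧ b ∉ s (n + 1) := by
  -- The homotopy inverts the unit entry, so `1 - (d h + h d)` splits off the summand `e_a ↦ r e_b`.
  let h : ∀ i, FreeHom R ν (F.ι i) (F.ι (i + 1)) := Pi.single (n + 1) (elementary a b ↑r⁻¹)
  have h_ne : ∀ i ≠ n + 1, h i = 0 := fun i hi => Pi.single_eq_of_ne hi _
  let s : ∀ i, Set (F.ι i) := fun i =>
    {x | (⟨i, x⟩ : Σ i, F.ι i) ≠ ⟨n + 1, b⟩ ∧ (⟨i, x⟩ : Σ i, F.ι i) ≠ ⟨n + 2, a⟩}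
  refine ⟨s, F.homotopyProj h, fun i => ?_, F.d_homotopyProj h, fun x => ?_, ?_, ?_⟩
  · by_cases h₁ : i = n + 1
    · subst h₁
      convert nonempty_gradedRetract_of_target (F.isGraded _) hab hr using 2
      · exact LinearMap.ext fun x => by simp [homotopyProj, h]
      · ext; simp [s]
    by_cases h₂ : i = n + 2
    · subst h₂
      convert nonempty_gradedRetract_of_source (F.isGraded _) hab hr using 2
      · exact LinearMap.ext fun x => by simp [homotopyProj, h]
      · ext; simp [s]
    · convert nonempty_gradedRetract_id (R := R) (ν := ν) (F.deg i) using 2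
      · rcases i with _ | i
        · exact LinearMap.ext fun x => by simp [homotopyProj, h]
        · exact LinearMap.ext fun x => by
            simp [homotopyProj, h_ne (i + 1) h₁, h_ne i (by omega)]
      · ext; simp [s, h₁, h₂]
  · simp [homotopyProj, h]
  · simp [s]
  · simp [s]

theorem exists_card_lt {K : Type*} [Field K] {I : Ideal (MvPolynomial ν K)}
    (F : QuotientResolution.{_, _, w} I) {i j : ℕ} (h : F.reducedD i j ≠ 0) :
    ∃ G : QuotientResolution.{_, _, w} I,
      Nat.card {b // G.deg i b = j} < Nat.card {b // F.deg i b = j} ∧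
      Nat.card {b // G.deg (i + 1) b = j} < Nat.card {b // F.deg (i + 1) b = j} := by
  rcases i with _ | n
  · exact absurd (F.reducedD_zero j) h
  obtain ⟨a, b, r, ha, hb, hr₀, hr⟩ := (F.isGraded (n + 1)).exists_entry_eq_C h
  obtain ⟨s, π, ρ, hd, hπ₀, ha', hb'⟩ := F.exists_retract_of_unit_entry
    (r := Units.mk0 r hr₀) hr (ha.trans hb.symm)
  have := F.finite (n + 1)
  have := F.finite (n + 2)
  exact ⟨F.retract (fun i => (ρ i).some) hd hπ₀,
    card_subtype_lt_of_notMem (P := fun b => F.deg (n + 1) b = j) hb' hb,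
    card_subtype_lt_of_notMem (P := fun a => F.deg (n + 2) a = j) ha' ha⟩

end QuotientResolution

end Elimination

theorem isHomogeneous_iff_degree {R ν : Type*} [CommSemiring R] {s : MvPolynomial ν R} {m : ℕ} :
    s.IsHomogeneous m ↔ ∀ u, coeff u s ≠ 0 → u.degree = m := by
  simp only [Finsupp.degree_eq_weight_one]
  rfl

theorem isGraded_iff_isHomogeneous {R ν α β : Type*} [CommRing R] {dα : α → ℕ} {dβ : β → ℕ}
    {f : FreeHom R ν α β} :
    IsGraded dα dβ f ↔ ∀ a b, f (Finsupp.single a 1) b = 0 ∨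
      ∃ m, dα a = dβ b + m ∧ (f (Finsupp.single a 1) b).IsHomogeneous m := by
  simp only [isGraded_iff_coeff, isHomogeneous_iff_degree]
  refine forall₂_congr fun a b => ⟨fun h => ?_, ?_⟩
  · rw [or_iff_not_imp_left]
    intro hne
    obtain ⟨u, hu⟩ := MvPolynomial.ne_zero_iff.1 hne
    exact ⟨u.degree, (h u hu).symm, fun v hv => by have := h u hu; have := h v hv; omega⟩
  · rintro (h | ⟨m, hm, h⟩) u hu
    · simp [h] at hu
    · rw [h u hu, hm]

section Betti

variable {k σ} {I : Ideal (MvPolynomial σ k)}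

namespace QuotientResolution

/-- A resolution of `I` in the sense of `GradedFreeRes`, prolonged by `S` in position zero. -/
def ofGradedFreeRes (F : GradedFreeRes k σ I) : QuotientResolution I where
  ι
    | 0 => Unit
    | i + 1 => Fin (F.rk i)
  finite
    | 0 => inferInstanceAs (Finite Unit)
    | i + 1 => inferInstanceAs (Finite (Fin (F.rk i)))
  deg
    | 0 => fun _ => 0
    | i + 1 => F.deg i
  d
    | 0 => Finsupp.lsingle () ∘ₗ F.aug
    | i + 1 => F.d i
  isGraded
    | 0 => isGraded_iff_isHomogeneous.2 fun a _ =>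
        Or.inr ⟨F.deg 0 a, by simp, by simpa using F.aug_graded a⟩
    | i + 1 => isGraded_iff_isHomogeneous.2 (F.d_graded i)
  exact
    | 0 => LinearMap.exact_iff.2 (by
        rw [F.exact_zero, LinearMap.ker_comp_of_ker_eq_bot]
        exact LinearMap.ker_eq_bot.2 (Finsupp.single_injective ()))
    | i + 1 => LinearMap.exact_iff.2 (F.exact_succ i).symm
  aug := Finsupp.uniqueLinearEquiv _ _ ()
  aug_degComponent p x := by
    ext u
    simp [coeff_degComponent, coeff_homogeneousComponent]
  map_range := by
    refine Eq.trans ?_ F.aug_range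
    rw [← LinearMap.range_comp]
    congr 1
    ext
    simp

theorem isHomogeneous_aug_d (F : QuotientResolution I) (b : F.ι 1) :
    (F.aug (F.d 0 (Finsupp.single b 1))).IsHomogeneous (F.deg 1 b) := by
  rw [← isGraded_iff.1 (F.isGraded 0) b, F.aug_degComponent]
  exact homogeneousComponent_isHomogeneous _ _

theorem exists_gradedFreeRes (F : QuotientResolution I) :
    ∃ G : GradedFreeRes k σ I, ∀ i j,
      (Finset.univ.filter fun b => G.deg i b = j).card = Nat.card {b // F.deg (i + 1) b = j} := by
  have := F.finite
  let e : ∀ i, F.ι (i + 1) ≃ Fin (Nat.card (F.ι (i + 1))) := fun i => Finite.equivFin _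
  let E : ∀ i, (F.ι (i + 1) →₀ MvPolynomial σ k) ≃ₗ[MvPolynomial σ k] _ :=
    fun i => Finsupp.domLCongr (e i)
  have hE : ∀ i b, (E i).symm (Finsupp.single b (1 : MvPolynomial σ k)) =
      Finsupp.single ((e i).symm b) 1 := fun i b => Finsupp.domLCongr_single _ _ _
  refine ⟨{
    rk i := Nat.card (F.ι (i + 1))
    deg i b := F.deg (i + 1) ((e i).symm b)
    aug := F.aug.toLinearMap ∘ₗ F.d 0 ∘ₗ (E 0).symm.toLinearMap
    d i := (E i).toLinearMap ∘ₗ F.d (i + 1) ∘ₗ (E (i + 1)).symm.toLinearMap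
    aug_range := ?_
    exact_zero := ?_
    exact_succ := fun i => ?_
    aug_graded := fun b => ?_
    d_graded := fun i b c => ?_ }, fun i j => ?_⟩
  · rw [LinearMap.range_comp, LinearEquiv.range_comp, F.map_range]
  · refine (LinearMap.exact_iff.1 (exact_of_retract (pA := (E 1).toLinearMap)
      (qC := F.aug.symm.toLinearMap) (F.exact 0) ?_ ?_ ?_)).symm <;> simp
  · refine (LinearMap.exact_iff.1 (exact_of_retract (pA := (E (i + 2)).toLinearMap)
      (qC := (E i).symm.toLinearMap) (F.exact (i + 1)) ?_ ?_ ?_)).symm <;> simp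
  · simpa [hE] using F.isHomogeneous_aug_d ((e 0).symm b)
  · simpa [hE, E, Finsupp.domLCongr_apply] using
      isGraded_iff_isHomogeneous.1 (F.isGraded (i + 1)) ((e (i + 1)).symm b) ((e i).symm c)
  · rw [← Fintype.card_subtype, ← Nat.card_eq_fintype_card]
    exact Nat.card_congr ((e i).symm.subtypeEquiv fun _ => Iff.rfl)

theorem betti_le_card (F : QuotientResolution I) (i j : ℕ) :
    betti k σ I i j ≤ Nat.card {b // F.deg (i + 1) b = j} := by
  obtain ⟨G, hG⟩ := F.exists_gradedFreeRes
  exact Nat.sInf_le ⟨G, (hG i j).symm⟩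

theorem exists_card_eq_betti (F : QuotientResolution I) (i j : ℕ) :
    ∃ G : QuotientResolution.{0, 0, 0} I,
      Nat.card {b // G.deg (i + 1) b = j} = betti k σ I i j := by
  obtain ⟨F', -⟩ := F.exists_gradedFreeRes
  obtain ⟨G, hG⟩ := Nat.sInf_mem (s := {r | ∃ F : GradedFreeRes k σ I,
    r = (Finset.univ.filter fun b => F.deg i b = j).card}) ⟨_, F', rfl⟩
  refine ⟨ofGradedFreeRes G, Eq.trans ?_ hG.symm⟩
  rw [← Fintype.card_subtype, ← Nat.card_eq_fintype_card]
  rfl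

end QuotientResolution

theorem betti_eq_homologyDim (F : QuotientResolution I) (i j : ℕ) :
    betti k σ I i j = homologyDim (F.reducedD i j) (F.reducedD (i + 1) j) := by
  obtain ⟨G, hG⟩ := F.exists_card_eq_betti i j
  rw [← hG]
  apply QuotientResolution.card_eq_homologyDim <;> by_contra h <;>
    obtain ⟨G', hlt, hlt'⟩ := G.exists_card_lt h
  · exact (hG.le.trans (G'.betti_le_card i j)).not_gt hlt
  · exact (hG.le.trans (G'.betti_le_card i j)).not_gt hlt'

theorem betti_eq_zero_of_not_fg (hI : ¬ I.FG) (i j : ℕ) : betti k σ I i j = 0 := by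
  refine Nat.sInf_eq_zero.2 (Or.inr (Set.eq_empty_of_forall_notMem ?_))
  rintro _ ⟨F, -⟩
  refine hI ?_
  rw [← F.aug_range, LinearMap.range_eq_map]
  exact (Module.finite_def.1 inferInstance).map _

end Betti

section Homogenization

variable {R : Type*} [CommRing R] {ν α β γ : Type*} {la : α → ν →₀ ℕ} {lb : β → ν →₀ ℕ}
  {lc : γ → ν →₀ ℕ}

/-- For basis elements labelled by exponent vectors, `y` only involves basis elements whose label
divides `u`. -/
def IsBoundedBy (l : α → ν →₀ ℕ) (u : ν →₀ ℕ) (y : α →₀ R) : Prop :=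
  ∀ a, y a ≠ 0 → l a ≤ u

/-- A linear map is compatible with labels of the bases if it only decreases them. -/
def IsLabeled (la : α → ν →₀ ℕ) (lb : β → ν →₀ ℕ) (D : (α →₀ R) →ₗ[R] (β →₀ R)) : Prop :=
  ∀ a, IsBoundedBy lb (la a) (D (Finsupp.single a 1))

/-- The multidegree `u` element obtained by giving the basis element `e_a` multidegree `l a`;
meaningful for `IsBoundedBy l u` families, since the exponent `u - l a` is truncated. -/
def homogenize (l : α → ν →₀ ℕ) (u : ν →₀ ℕ) : (α →₀ R) →ₗ[R] (α →₀ MvPolynomial ν R) :=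
  diagonalMap fun a => monomial (u - l a)

/-- The value at `x = 1` of the component of multidegree `u`. -/
def dehomogenize (l : α → ν →₀ ℕ) (u : ν →₀ ℕ) : (α →₀ MvPolynomial ν R) →ₗ[R] (α →₀ R) :=
  open Classical in diagonalMap fun a => if l a ≤ u then lcoeff R (u - l a) else 0

/-- The multihomogeneous map of free `MvPolynomial ν R`-modules that becomes `D` at `x = 1`. -/
def homogenization (la : α → ν →₀ ℕ) (lb : β → ν →₀ ℕ) (D : (α →₀ R) →ₗ[R] (β →₀ R)) :
    FreeHom R ν α β :=
  Finsupp.linearCombination _ fun a => homogenize lb (la a) (D (Finsupp.single a 1))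

theorem homogenize_apply (l : α → ν →₀ ℕ) (u : ν →₀ ℕ) (y : α →₀ R) (a : α) :
    homogenize l u y a = monomial (u - l a) (y a) :=
  diagonalMap_apply _ _ _

theorem dehomogenize_apply [DecidableLE (ν →₀ ℕ)] (l : α → ν →₀ ℕ) (u : ν →₀ ℕ)
    (x : α →₀ MvPolynomial ν R) (a : α) :
    dehomogenize l u x a = if l a ≤ u then coeff (u - l a) (x a) else 0 := by
  rw [dehomogenize, diagonalMap_apply]
  split_ifs <;> rfl

theorem isBoundedBy_dehomogenize (l : α → ν →₀ ℕ) (u : ν →₀ ℕ) (x : α →₀ MvPolynomial ν R) :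
    IsBoundedBy l u (dehomogenize l u x) := by
  classical
  intro a ha
  rw [dehomogenize_apply] at ha
  exact (ite_ne_right_iff.1 ha).1

theorem homogenize_single (l : α → ν →₀ ℕ) (u : ν →₀ ℕ) (a : α) (r : R) :
    homogenize l u (Finsupp.single a r) = Finsupp.single a (monomial (u - l a) r) := by
  simp [homogenize, diagonalMap]

theorem coeff_homogenize_dehomogenize (l : α → ν →₀ ℕ) (u w : ν →₀ ℕ)
    (x : α →₀ MvPolynomial ν R) (a : α) [Decidable (u = w + l a)] :
    coeff w (homogenize l u (dehomogenize l u x) a) = if u = w + l a then coeff w (x a) else 0 := by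
  classical
  rw [homogenize_apply, dehomogenize_apply, coeff_monomial]
  by_cases h : l a ≤ u
  · simp only [h, if_true, tsub_eq_iff_eq_add_of_le h]
    split_ifs with huw
    · rw [huw, add_tsub_cancel_right]
    · rfl
  · have : u ≠ w + l a := fun huw => h (huw ▸ le_add_self)
    simp [h, this]

theorem exists_eq_sum_homogenize (l : α → ν →₀ ℕ) (x : α →₀ MvPolynomial ν R) :
    ∃ U : Finset (ν →₀ ℕ), x = ∑ u ∈ U, homogenize l u (dehomogenize l u x) := by
  classical
  refine ⟨x.support.biUnion fun a => (x a).support.image (· + l a), Finsupp.ext fun a => ?_⟩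
  ext w
  rw [Finsupp.finsetSum_apply, coeff_sum]
  simp only [coeff_homogenize_dehomogenize, Finset.sum_ite_eq', Finset.mem_biUnion]
  by_cases hw : coeff w (x a) = 0
  · simp [hw]
  · rw [if_pos]
    exact ⟨a, Finsupp.mem_support_iff.2 fun h => hw (by simp [h]),
      Finset.mem_image_of_mem _ (mem_support_iff.2 hw)⟩

theorem monomial_smul_homogenize {u : ν →₀ ℕ} {y : α →₀ R} (hy : IsBoundedBy la u y)
    (w : ν →₀ ℕ) (r : R) :
    monomial w r • homogenize la u y = homogenize la (w + u) (r • y) := by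
  ext1 a
  rw [Finsupp.smul_apply, homogenize_apply, homogenize_apply, smul_eq_mul, monomial_mul,
    Finsupp.smul_apply, smul_eq_mul]
  by_cases h : y a = 0
  · simp [h]
  · rw [add_tsub_assoc_of_le (hy a h)]

theorem dehomogenize_homogenize {u v : ν →₀ ℕ} {y : α →₀ R} (hy : IsBoundedBy la v y)
    [Decidable (v = u)] :
    dehomogenize la u (homogenize la v y) = if v = u then y else 0 := by
  classical
  ext a
  rw [dehomogenize_apply, homogenize_apply, coeff_monomial]
  by_cases h : y a = 0
  · split_ifs <;> simp [h]
  by_cases hu : la a ≤ u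
  · simp only [hu, if_true, tsub_left_inj (hy a h) hu]
    split_ifs <;> rfl
  · have hvu : v ≠ u := fun hvu => hu (hvu ▸ hy a h)
    rw [if_neg hu, if_neg hvu, Finsupp.zero_apply]

theorem dehomogenize_single_monomial (l : α → ν →₀ ℕ) (u w : ν →₀ ℕ) (a : α) (r : R)
    [Decidable (w + l a = u)] :
    dehomogenize l u (Finsupp.single a (monomial w r)) =
      if w + l a = u then Finsupp.single a r else 0 := by
  have h : Finsupp.single a (monomial w r) = homogenize l (w + l a) (Finsupp.single a r) := by
    rw [homogenize_single, add_tsub_cancel_right]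
  rw [h, dehomogenize_homogenize]
  intro b hb
  rw [(Finsupp.single_apply_ne_zero.1 hb).1]
  exact le_add_self

variable {D : (α →₀ R) →ₗ[R] (β →₀ R)} {D' : (β →₀ R) →ₗ[R] (γ →₀ R)}

theorem IsLabeled.homogenization_single_monomial (hD : IsLabeled la lb D) (a : α) (w : ν →₀ ℕ)
    (r : R) : homogenization la lb D (Finsupp.single a (monomial w r)) =
      homogenize lb (w + la a) (D (Finsupp.single a r)) := by
  rw [homogenization, Finsupp.linearCombination_single, monomial_smul_homogenize (hD a),
    ← map_smul, Finsupp.smul_single_one]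

theorem IsLabeled.homogenization_homogenize (hD : IsLabeled la lb D) {u : ν →₀ ℕ} {y : α →₀ R}
    (hy : IsBoundedBy la u y) :
    homogenization la lb D (homogenize la u y) = homogenize lb u (D y) := by
  rw [← y.sum_single, map_finsuppSum, map_finsuppSum, map_finsuppSum, map_finsuppSum]
  refine Finset.sum_congr rfl fun a ha => ?_
  dsimp only
  rw [homogenize_single, hD.homogenization_single_monomial,
    tsub_add_cancel_of_le (hy a (Finsupp.mem_support_iff.1 ha))]

theorem IsLabeled.isBoundedBy (hD : IsLabeled la lb D) (a : α) (w : ν →₀ ℕ) (r : R) :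
    IsBoundedBy lb (w + la a) (D (Finsupp.single a r)) := fun b hb => by
  rw [← Finsupp.smul_single_one, map_smul, Finsupp.smul_apply] at hb
  exact (hD a b (right_ne_zero_of_smul hb)).trans le_add_self

theorem IsLabeled.dehomogenize_homogenization (hD : IsLabeled la lb D) (u : ν →₀ ℕ)
    (x : α →₀ MvPolynomial ν R) :
    dehomogenize lb u (homogenization la lb D x) = D (dehomogenize la u x) := by
  classical
  induction x using Finsupp.induction_linear with
  | zero => simp
  | add x y hx hy => simp only [map_add, hx, hy]
  | single a s =>
    induction s using MvPolynomial.induction_on' with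
    | add s t hs ht => simp only [Finsupp.single_add, map_add, hs, ht]
    | monomial w r =>
      rw [hD.homogenization_single_monomial, dehomogenize_homogenize (hD.isBoundedBy a w r),
        dehomogenize_single_monomial, apply_ite D, map_zero]

theorem exact_homogenization (hD : IsLabeled la lb D) (hD' : IsLabeled lb lc D')
    (hcomp : ∀ x, D' (D x) = 0)
    (hexact : ∀ u y, IsBoundedBy lb u y → D' y = 0 → ∃ x, IsBoundedBy la u x ∧ D x = y) :
    Function.Exact (homogenization la lb D) (homogenization lb lc D') := by
  intro y
  constructor
  · intro hy
    have hcycle : ∀ u, D' (dehomogenize lb u y) = 0 := fun u => by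
      rw [← hD'.dehomogenize_homogenization, hy, map_zero]
    choose x hx hDx using fun u =>
      hexact u (dehomogenize lb u y) (isBoundedBy_dehomogenize lb u y) (hcycle u)
    obtain ⟨U, hU⟩ := exists_eq_sum_homogenize lb y
    refine ⟨∑ u ∈ U, homogenize la u (x u), ?_⟩
    rw [hU, map_sum]
    exact Finset.sum_congr rfl fun u _ => by rw [hD.homogenization_homogenize (hx u), hDx]
  · rintro ⟨x, rfl⟩
    obtain ⟨U, hU⟩ := exists_eq_sum_homogenize lc
      (homogenization lb lc D' (homogenization la lb D x))
    rw [hU]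
    refine Finset.sum_eq_zero fun u _ => ?_
    rw [hD'.dehomogenize_homogenization, hD.dehomogenize_homogenization, hcomp, map_zero]

theorem homogenization_single_one_apply (la : α → ν →₀ ℕ) (lb : β → ν →₀ ℕ)
    (D : (α →₀ R) →ₗ[R] (β →₀ R)) (a : α) (b : β) :
    homogenization la lb D (Finsupp.single a 1) b =
      monomial (la a - lb b) (D (Finsupp.single a 1) b) := by
  rw [homogenization, Finsupp.linearCombination_single, one_smul, homogenize_apply]

theorem IsLabeled.isGraded_homogenization (hD : IsLabeled la lb D) :
    IsGraded (fun a => (la a).degree) (fun b => (lb b).degree) (homogenization la lb D) := by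
  classical
  refine isGraded_iff_coeff.2 fun a b u hu => ?_
  rw [homogenization_single_one_apply, coeff_monomial, ite_ne_right_iff] at hu
  rw [← hu.1, ← map_add, add_tsub_cancel_of_le (hD a b hu.2)]

theorem IsLabeled.reduction_homogenization (hD : IsLabeled la lb D) (j : ℕ) :
    reduction (fun a => (la a).degree) (fun b => (lb b).degree) j (homogenization la lb D) =
      strand (fun a => (la a).degree) (fun b => (lb b).degree) j D := by
  classical
  refine Finsupp.lhom_ext' fun a => LinearMap.ext_ring (Finsupp.ext fun b => ?_)
  rw [LinearMap.comp_apply, LinearMap.comp_apply, Finsupp.lsingle_apply, reduction_single,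
    strand_single, homogenization_single_one_apply, coeff_monomial, ite_eq_left_iff]
  intro hne
  by_contra h
  have hle := hD a.1 b.1 (Ne.symm h)
  have hdeg := congrArg Finsupp.degree (add_tsub_cancel_of_le hle)
  rw [map_add] at hdeg
  have := a.2
  have := b.2
  exact hne ((Finsupp.degree_eq_zero_iff _).1 (by omega))

end Homogenization

section Simplex

variable {R : Type*} [CommRing R] {α : Type*}

/-- The cone with apex `c` on tuples of vertices. -/
def cone (R : Type*) [CommRing R] {i : ℕ} (c : α) :
    ((Fin i → α) →₀ R) →ₗ[R] ((Fin (i + 1) → α) →₀ R) :=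
  Finsupp.lmapDomain R R fun τ => Fin.cons c τ

theorem cone_single {i : ℕ} (c : α) (τ : Fin i → α) (r : R) :
    cone R c (Finsupp.single τ r) = Finsupp.single (Fin.cons c τ : Fin (i + 1) → α) r :=
  Finsupp.mapDomain_single

theorem cone_apply_cons {i : ℕ} (c : α) (y : (Fin i → α) →₀ R) (τ : Fin i → α) :
    cone R c y (Fin.cons c τ) = y τ :=
  Finsupp.mapDomain_apply (Fin.cons_right_injective (α := fun _ => α) c) y τ

theorem exists_eq_cons_of_cone_apply_ne_zero {i : ℕ} {c : α} {y : (Fin i → α) →₀ R}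
    {τ : Fin (i + 1) → α} (h : cone R c y τ ≠ 0) : ∃ ρ, τ = Fin.cons c ρ ∧ y ρ ≠ 0 := by
  obtain ⟨ρ, rfl⟩ : τ ∈ Set.range fun ρ : Fin i → α => (Fin.cons c ρ : Fin (i + 1) → α) := by
    by_contra hτ
    exact h (Finsupp.mapDomain_of_notMem_range _ _ hτ)
  exact ⟨ρ, rfl, by rwa [cone_apply_cons] at h⟩

/-- The boundary `e_τ ↦ ∑ₚ (-1)ᵖ e_{τ without its p-th entry}` of the full simplex on `α`
(on all tuples, including degenerate ones), encoded by the recursion `∂(c * τ) = τ - c * ∂τ`. -/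
def simplexBoundary (R : Type*) [CommRing R] (α : Type*) :
    ∀ i : ℕ, ((Fin (i + 1) → α) →₀ R) →ₗ[R] ((Fin i → α) →₀ R)
  | 0 => Finsupp.lmapDomain R R fun τ : Fin 1 → α => Fin.tail τ
  | i + 1 => Finsupp.linearCombination R fun τ : Fin (i + 2) → α =>
      Finsupp.single (Fin.tail τ) 1 -
        cone R (τ 0) (simplexBoundary R α i (Finsupp.single (Fin.tail τ) 1))

theorem linearMap_ext_cone {M : Type*} [AddCommGroup M] [Module R M] {i : ℕ}
    {f g : ((Fin (i + 1) → α) →₀ R) →ₗ[R] M} (h : ∀ c y, f (cone R c y) = g (cone R c y)) :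
    f = g := by
  refine Finsupp.lhom_ext fun τ r => ?_
  rw [← Fin.cons_self_tail τ, ← cone_single, h]

theorem simplexBoundary_zero_cone (c : α) (y : (Fin 0 → α) →₀ R) :
    simplexBoundary R α 0 (cone R c y) = y := by
  refine LinearMap.congr_fun (f := simplexBoundary R α 0 ∘ₗ cone R c) (g := LinearMap.id)
    (Finsupp.lhom_ext' fun τ => LinearMap.ext_ring ?_) y
  simp [cone_single, simplexBoundary, Finsupp.mapDomain_single]

theorem simplexBoundary_succ_cone (c : α) (i : ℕ) (y : (Fin (i + 1) → α) →₀ R) :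
    simplexBoundary R α (i + 1) (cone R c y) = y - cone R c (simplexBoundary R α i y) := by
  refine LinearMap.congr_fun (f := simplexBoundary R α (i + 1) ∘ₗ cone R c)
    (g := LinearMap.id - cone R c ∘ₗ simplexBoundary R α i)
    (Finsupp.lhom_ext' fun τ => LinearMap.ext_ring ?_) y
  simp [cone_single, simplexBoundary]

theorem simplexBoundary_comp_simplexBoundary (i : ℕ) :
    simplexBoundary R α i ∘ₗ simplexBoundary R α (i + 1) = 0 := by
  induction i with
  | zero =>
    refine linearMap_ext_cone fun c y => ?_
    simp [simplexBoundary_succ_cone, simplexBoundary_zero_cone]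
  | succ i ih =>
    refine linearMap_ext_cone fun c y => ?_
    have hy := LinearMap.congr_fun ih y
    rw [LinearMap.comp_apply, LinearMap.zero_apply] at hy
    simp [simplexBoundary_succ_cone, hy]

theorem range_subset_of_simplexBoundary_ne_zero (i : ℕ) {τ : Fin (i + 1) → α} {ρ : Fin i → α}
    (h : simplexBoundary R α i (Finsupp.single τ 1) ρ ≠ 0) : Set.range ρ ⊆ Set.range τ := by
  induction i with
  | zero => simp [Set.range_eq_empty]
  | succ i ih =>
    rw [← Fin.cons_self_tail τ, ← cone_single, simplexBoundary_succ_cone, Finsupp.sub_apply] at h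
    by_cases htail : ρ = Fin.tail τ
    · exact htail ▸ Set.range_comp_subset_range Fin.succ τ
    · rw [Finsupp.single_eq_of_ne htail, zero_sub, neg_ne_zero] at h
      obtain ⟨ρ', rfl, hρ'⟩ := exists_eq_cons_of_cone_apply_ne_zero h
      rw [Fin.range_cons, Set.insert_subset_iff]
      exact ⟨⟨0, rfl⟩, (ih hρ').trans (Set.range_comp_subset_range Fin.succ τ)⟩

end Simplex

section Taylor

variable {R : Type*} [CommRing R] {ν α : Type*}

/-- The exponent vector of the least common multiple of the monomials `x ^ g c`, for `c` running
through the entries of a tuple. -/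
def tupleLcm (g : α → ν →₀ ℕ) {i : ℕ} (τ : Fin i → α) : ν →₀ ℕ :=
  Finset.univ.sup fun t => g (τ t)

theorem le_tupleLcm (g : α → ν →₀ ℕ) {i : ℕ} (τ : Fin i → α) (t : Fin i) :
    g (τ t) ≤ tupleLcm g τ :=
  Finset.le_sup (f := fun t => g (τ t)) (Finset.mem_univ t)

theorem tupleLcm_of_isEmpty (g : α → ν →₀ ℕ) (τ : Fin 0 → α) : tupleLcm g τ = 0 := by
  rw [tupleLcm, Finset.univ_eq_empty, Finset.sup_empty, bot_eq_zero]

theorem isLabeled_simplexBoundary (g : α → ν →₀ ℕ) (i : ℕ) :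
    IsLabeled (tupleLcm g) (tupleLcm g) (simplexBoundary R α i) := by
  refine fun τ ρ hρ => Finset.sup_le fun t _ => ?_
  obtain ⟨s, hs⟩ := range_subset_of_simplexBoundary_ne_zero i hρ ⟨t, rfl⟩
  exact hs ▸ le_tupleLcm g τ s

theorem isBoundedBy_cone {g : α → ν →₀ ℕ} {i : ℕ} {u : ν →₀ ℕ} {y : (Fin i → α) →₀ R}
    (hy : IsBoundedBy (tupleLcm g) u y) {c : α} (hc : g c ≤ u) :
    IsBoundedBy (tupleLcm g) u (cone R c y) := by
  intro τ hτ
  obtain ⟨ρ, rfl, hρ⟩ := exists_eq_cons_of_cone_apply_ne_zero hτ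
  exact Finset.sup_le fun t _ => Fin.cases hc (fun t => (le_tupleLcm g ρ t).trans (hy ρ hρ)) t

theorem exact_homogenization_simplexBoundary (g : α → ν →₀ ℕ) (i : ℕ) :
    Function.Exact
      (homogenization (tupleLcm g) (tupleLcm g) (simplexBoundary R α (i + 1)))
      (homogenization (tupleLcm g) (tupleLcm g) (simplexBoundary R α i)) := by
  refine exact_homogenization (isLabeled_simplexBoundary g _) (isLabeled_simplexBoundary g _)
    (LinearMap.congr_fun (simplexBoundary_comp_simplexBoundary i)) fun u y hy hcycle => ?_
  rcases eq_or_ne y 0 with rfl | hne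
  · exact ⟨0, fun _ h => (h rfl).elim, map_zero _⟩
  · obtain ⟨τ, hτ⟩ := Finsupp.ne_iff.1 hne
    exact ⟨cone R (τ 0) y, isBoundedBy_cone hy ((le_tupleLcm g τ 0).trans (hy τ hτ)),
      by rw [simplexBoundary_succ_cone, hcycle, map_zero, sub_zero]⟩

theorem range_homogenization_simplexBoundary_zero (g : α → ν →₀ ℕ) (e : Fin 0 → α) :
    (LinearMap.range (homogenization (tupleLcm g) (tupleLcm g) (simplexBoundary R α 0))).map
        (Finsupp.uniqueLinearEquiv (MvPolynomial ν R) (MvPolynomial ν R) e).toLinearMap =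
      Ideal.span (Set.range fun a => monomial (g a) (1 : R)) := by
  have hgen : (Finsupp.uniqueLinearEquiv (MvPolynomial ν R) (MvPolynomial ν R) e).toLinearMap ∘ₗ
      homogenization (tupleLcm g) (tupleLcm g) (simplexBoundary R α 0) =
        Finsupp.linearCombination _ fun τ : Fin 1 → α => monomial (g (τ 0)) (1 : R) := by
    refine Finsupp.lhom_ext' fun τ => LinearMap.ext_ring ?_
    have hτ : tupleLcm g τ = g (τ 0) := by simp [tupleLcm]
    simp [homogenization_single_one_apply, tupleLcm_of_isEmpty, simplexBoundary, hτ,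
      Subsingleton.elim _ e]
  rw [← LinearMap.range_comp, hgen, Finsupp.range_linearCombination]
  congr 1
  exact (Equiv.funUnique (Fin 1) α).surjective.range_comp fun a => monomial (g a) (1 : R)

/-- The Taylor resolution of the ideal generated by the monomials `x ^ g a`, in its non-alternating
form with one basis element for every tuple of generators. -/
def taylor [Finite α] (g : α → ν →₀ ℕ) :
    QuotientResolution (Ideal.span (Set.range fun a => monomial (g a) (1 : R))) where
  ι i := Fin i → α
  finite _ := inferInstance
  deg _ τ := (tupleLcm g τ).degree
  d i := homogenization (tupleLcm g) (tupleLcm g) (simplexBoundary R α i)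
  isGraded i := (isLabeled_simplexBoundary g i).isGraded_homogenization
  exact i := exact_homogenization_simplexBoundary g i
  aug := Finsupp.uniqueLinearEquiv _ _ Fin.elim0
  aug_degComponent p x := by
    ext u
    simp [coeff_degComponent, coeff_homogeneousComponent, tupleLcm_of_isEmpty]
  map_range := range_homogenization_simplexBoundary_zero g Fin.elim0

/-- The degree `j` strand of the boundary of the full simplex for the basis degrees `δ`, with the
augmentation replaced by zero. -/
def simplexStrand (R : Type*) [CommRing R] (δ : ∀ i, (Fin i → α) → ℕ) (i j : ℕ) :
    ({τ // δ (i + 1) τ = j} →₀ R) →ₗ[R] ({τ // δ i τ = j} →₀ R) :=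
  if i = 0 then 0 else strand (δ (i + 1)) (δ i) j (simplexBoundary R α i)

theorem reducedD_taylor [Finite α] (g : α → ν →₀ ℕ) (i j : ℕ) :
    (taylor (R := R) g).reducedD i j = simplexStrand R (fun _ τ => (tupleLcm g τ).degree) i j := by
  rw [QuotientResolution.reducedD, simplexStrand]
  split_ifs
  · rfl
  · exact (isLabeled_simplexBoundary g i).reduction_homogenization j

theorem betti_span_range_monomial {k σ : Type} [Field k] [Finite α] {g : α → σ →₀ ℕ}
    {δ : ∀ i, (Fin i → α) → ℕ} (hδ : ∀ i τ, δ i τ = (tupleLcm g τ).degree) (i j : ℕ) :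
    betti k σ (Ideal.span (Set.range fun a => monomial (g a) 1)) i j =
      homologyDim (simplexStrand k δ i j) (simplexStrand k δ (i + 1) j) := by
  obtain rfl : δ = fun _ τ => (tupleLcm g τ).degree := funext₂ hδ
  rw [betti_eq_homologyDim (taylor g), reducedD_taylor, reducedD_taylor]
  rfl

end Taylor

section Polarization

variable {σ}

theorem polarize_apply (u : σ →₀ ℕ) (p : σ × ℕ) :
    polarize σ u p = if p.2 < u p.1 then 1 else 0 := by
  classical
  have hsum : ∀ i, (∑ j ∈ Finset.range (u i), Finsupp.single (i, j) 1 : σ × ℕ →₀ ℕ) p =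
      if i = p.1 ∧ p.2 < u i then 1 else 0 := fun i => by
    rcases p with ⟨i', j'⟩
    by_cases h : i = i' <;> simp [Finsupp.finsetSum_apply, Finsupp.single_apply, h]
  rw [polarize, Finsupp.sum, Finsupp.finsetSum_apply]
  simp only [hsum, ite_and, Finset.sum_ite_eq', Finsupp.mem_support_iff]
  grind

theorem degree_polarize (u : σ →₀ ℕ) : (polarize σ u).degree = u.degree := by
  simp [polarize, Finsupp.sum, Finsupp.degree_apply]

theorem polarize_sup (u v : σ →₀ ℕ) : polarize σ (u ⊔ v) = polarize σ u ⊔ polarize σ v := by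
  ext p
  simp only [Finsupp.sup_apply, polarize_apply]
  grind

theorem polarize_zero : polarize σ 0 = 0 :=
  Finsupp.sum_zero_index

theorem polarize_le_polarize {u v : σ →₀ ℕ} : polarize σ u ≤ polarize σ v ↔ u ≤ v := by
  constructor
  · intro h i
    by_contra! hlt
    simpa [polarize_apply, hlt] using h (i, v i)
  · intro h
    rw [← sup_eq_right, ← polarize_sup, sup_eq_right.2 h]

theorem tupleLcm_polarize {α : Type*} (g : α → σ →₀ ℕ) {i : ℕ} (τ : Fin i → α) :
    tupleLcm (fun a => polarize σ (g a)) τ = polarize σ (tupleLcm g τ) :=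
  (Finset.apply_sup_eq_sup_comp (polarize σ) polarize_sup
    (by rw [bot_eq_zero, bot_eq_zero, polarize_zero])).symm

end Polarization

section MonomialIdeals

variable {k σ} {A : Set (σ →₀ ℕ)} {I : Ideal (MvPolynomial σ k)}

theorem mon_mem_span_iff {a : σ →₀ ℕ} : mon k σ a ∈ Ideal.span (mon k σ '' A) ↔ ∃ b ∈ A, b ≤ a := by
  classical
  exact mem_ideal_span_monomial_image.trans (by simp [mon, support_monomial])

theorem finite_of_isAntichain_of_fg (hA : IsAntichain (· ≤ ·) A)
    (h : (Ideal.span (mon k σ '' A)).FG) : A.Finite := by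
  classical
  obtain ⟨t, ht, hspan⟩ := (Submodule.fg_span_iff_fg_span_finset_subset _).1 h
  obtain ⟨T, hTA, rfl⟩ := Finset.subset_set_image_iff.1 ht
  refine T.finite_toSet.subset fun a ha => ?_
  have hmem : mon k σ a ∈ Ideal.span (mon k σ '' T) := by
    rw [← Finset.coe_image]
    exact hspan.le (Submodule.subset_span ⟨a, ha, rfl⟩)
  obtain ⟨b, hb, hba⟩ := mon_mem_span_iff.1 hmem
  rwa [← hA.eq (hTA hb) ha hba]

theorem mem_minGens_iff_minimal {a : σ →₀ ℕ} :
    a ∈ minGens k σ I ↔ Minimal (fun b => mon k σ b ∈ I) a :=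
  ⟨fun h => ⟨h.1, fun b hb hba => (h.2 b hb hba).ge⟩,
    fun h => ⟨h.1, fun _ hb hba => h.eq_of_le hb hba⟩⟩

theorem isAntichain_minGens : IsAntichain (· ≤ ·) (minGens k σ I) :=
  fun _ ha _ hb hne hle => hne (hb.2 _ ha.1 hle)

theorem IsMonomialIdeal.span_minGens (hI : IsMonomialIdeal k σ I) :
    Ideal.span (mon k σ '' minGens k σ I) = I := by
  obtain ⟨A, hA⟩ := hI
  refine le_antisymm (Ideal.span_le.2 ?_) (hA.le.trans (Ideal.span_le.2 ?_))
  · rintro _ ⟨a, ha, rfl⟩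
    exact ha.1
  · rintro _ ⟨a, ha, rfl⟩
    have hmem : mon k σ a ∈ I := hA ▸ Ideal.subset_span ⟨a, ha, rfl⟩
    obtain ⟨b, hba, hb⟩ := exists_minimal_le_of_wellFoundedLT (fun b => mon k σ b ∈ I) a hmem
    exact mon_mem_span_iff.2 ⟨b, mem_minGens_iff_minimal.2 hb, hba⟩

theorem betti_span_image_polarize (hA : IsAntichain (· ≤ ·) A) (i j : ℕ) :
    betti k σ (Ideal.span (mon k σ '' A)) i j =
      betti k (σ × ℕ) (Ideal.span (mon k (σ × ℕ) '' (polarize σ '' A))) i j := by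
  by_cases hfin : A.Finite
  · have : Finite A := hfin
    rw [Set.image_image, Set.image_eq_range, Set.image_eq_range]
    refine (betti_span_range_monomial (fun _ _ => rfl) i j).trans
      (betti_span_range_monomial (fun _ τ => ?_) i j).symm
    rw [tupleLcm_polarize, degree_polarize]
  · let e : (σ →₀ ℕ) ↪o (σ × ℕ →₀ ℕ) := OrderEmbedding.ofMapLEIff _ fun _ _ => polarize_le_polarize
    rw [betti_eq_zero_of_not_fg, betti_eq_zero_of_not_fg]
    · exact fun h => hfin ((finite_of_isAntichain_of_fg (hA.image_embedding e) h).of_finite_image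
        e.injective.injOn)
    · exact fun h => hfin (finite_of_isAntichain_of_fg hA h)

end MonomialIdeals

/-- a monomial ideal and its polarization have the same graded Betti
numbers, and in particular the same regularity. -/
theorem betti_reg_polarization
    (I : Ideal (MvPolynomial σ k)) (hmon : IsMonomialIdeal k σ I) :
    (∀ i j : ℕ, betti k σ I i j = betti k (σ × ℕ) (polarIdeal k σ I) i j) ∧
    reg k σ I = reg k (σ × ℕ) (polarIdeal k σ I) := by
  have hpolar : polarIdeal k σ I =
      Ideal.span (mon k (σ × ℕ) '' (polarize σ '' minGens k σ I)) := by
    rw [Set.image_image]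
    rfl
  have hbetti : ∀ i j, betti k σ I i j = betti k (σ × ℕ) (polarIdeal k σ I) i j := fun i j => by
    conv_lhs => rw [← hmon.span_minGens]
    rw [hpolar, betti_span_image_polarize isAntichain_minGens]
  refine ⟨hbetti, ?_⟩
  simp only [reg, hbetti]

end PaperReg
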